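/- arXiv:2112.01847 — 5 statements merged into one kernel-verified Lean document; each statement's English description precedes it below -/
import Mathlib

section
/- For a finite topological space X, the following are equivalent: (i) X is a connected topological space; (ii) X is order-connected, i.e., any two points of X are joined by a fence: a finite sequence x = x_0, x_1, …, x_n = y in which every two consecutive elements are comparable in the specialization preorder; (iii) X is path-connected. -/
/-!
For points of any space, `x ∈ minNbhd y` says exactly that `x` specializes to `y` (`x ⤳ y`).
If `x ⤳ y`, the map on `[0, 1]` equal to `x` away from one endpoint and to `y` at that endpoint
is a path, so a fence yields a path between its ends, and path-connected spaces are connected.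
Conversely, in a finite (hence Alexandrov-discrete) space a set is open as soon as it is stable
under generization, so the set of points reachable from `x` by fences, being stable under
comparability in both directions, is clopen; in a connected space it is therefore everything.
-/

/-- The minimal neighborhood of a point: the intersection of all open sets containing it. -/
def minNbhd {X : Type*} [TopologicalSpace X] (x : X) : Set X :=
  ⋂₀ {U : Set X | IsOpen U ∧ x ∈ U}

theorem mem_minNbhd_iff_specializes {X : Type*} [TopologicalSpace X] {x y : X} :
    x ∈ minNbhd y ↔ x ⤳ y := by
  rw [specializes_iff_forall_open]
  simp only [minNbhd, Set.mem_sInter, Set.mem_ofPred_eq, and_imp]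

theorem exists_fence_of_reflTransGen {X : Type*} {r : X → X → Prop} {x y : X}
    (h : Relation.ReflTransGen r x y) :
    ∃ (n : ℕ) (c : ℕ → X), c 0 = x ∧ c n = y ∧ ∀ i < n, r (c i) (c (i + 1)) := by
  induction h using Relation.ReflTransGen.head_induction_on with
  | refl => exact ⟨0, fun _ => y, rfl, rfl, fun i hi => absurd hi (Nat.not_lt_zero i)⟩
  | @head a b hab _ ih =>
    obtain ⟨n, c, h0, hn, hc⟩ := ih
    refine ⟨n + 1, fun i => Nat.casesOn i a c, rfl, hn, fun i hi => ?_⟩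
    cases i with
    | zero => simpa [h0] using hab
    | succ i => exact hc i (by omega)

theorem joined_of_specializes {X : Type*} [TopologicalSpace X] {x y : X} (h : x ⤳ y) :
    Joined x y :=
  (h.joinedIn (Set.mem_univ x) (Set.mem_univ y)).joined

theorem reflTransGen_specializes_of_connected {X : Type*} [TopologicalSpace X]
    [AlexandrovDiscrete X] [ConnectedSpace X] (x y : X) :
    Relation.ReflTransGen (fun a b : X => a ⤳ b ∨ b ⤳ a) x y := by
  let S : Set X := {z | Relation.ReflTransGen (fun a b : X => a ⤳ b ∨ b ⤳ a) x z}
  have hopen : IsOpen S :=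
    isOpen_iff_forall_specializes.2 fun _ _ hab hb => Relation.ReflTransGen.tail hb (Or.inr hab)
  have hclosed : IsClosed S := by
    refine isOpen_compl_iff.1 (isOpen_iff_forall_specializes.2 fun a b hab hb ha => hb ?_)
    exact Relation.ReflTransGen.tail ha (Or.inl hab)
  have huniv : S = Set.univ := IsClopen.eq_univ ⟨hclosed, hopen⟩ ⟨x, Relation.ReflTransGen.refl⟩
  exact huniv.ge (Set.mem_univ y)

theorem stmt6 {X : Type*} [TopologicalSpace X] [Finite X] [Nonempty X] :
    (ConnectedSpace X ↔
      ∀ x y : X, ∃ (n : ℕ) (c : ℕ → X), c 0 = x ∧ c n = y ∧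
        ∀ i < n, c i ∈ minNbhd (c (i + 1)) ∨ c (i + 1) ∈ minNbhd (c i)) ∧
    (ConnectedSpace X ↔ PathConnectedSpace X) := by
  simp only [mem_minNbhd_iff_specializes]
  have fence_of_conn (_ : ConnectedSpace X) (x y : X) :
      ∃ (n : ℕ) (c : ℕ → X), c 0 = x ∧ c n = y ∧
        ∀ i < n, c i ⤳ c (i + 1) ∨ c (i + 1) ⤳ c i :=
    exists_fence_of_reflTransGen (reflTransGen_specializes_of_connected x y)
  have path_of_fence (h : ∀ x y : X, ∃ (n : ℕ) (c : ℕ → X), c 0 = x ∧ c n = y ∧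
      ∀ i < n, c i ⤳ c (i + 1) ∨ c (i + 1) ⤳ c i) : PathConnectedSpace X := by
    refine ⟨inferInstance, fun x y => ?_⟩
    obtain ⟨n, c, rfl, rfl, hc⟩ := h x y
    have key : ∀ i ≤ n, Joined (c 0) (c i) := by
      intro i
      induction i with
      | zero => exact fun _ => Joined.refl _
      | succ i ih =>
        intro hi
        refine (ih (by omega)).trans ?_
        rcases hc i (by omega) with h | h
        · exact joined_of_specializes h
        · exact (joined_of_specializes h).symm
    exact key n le_rfl
  have conn_of_path (_ : PathConnectedSpace X) : ConnectedSpace X := inferInstance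
  exact ⟨⟨fence_of_conn, fun h => conn_of_path (path_of_fence h)⟩,
    ⟨fun h => path_of_fence (fence_of_conn h), conn_of_path⟩⟩
end

section
/- (Mirsky's theorem) In a finite partially ordered set P, the maximum cardinality of a chain (a totally ordered subset) equals the minimum number of antichains (subsets in which no two distinct elements are comparable) into which P can be partitioned. -/
/-!
A chain meets each antichain in at most one point, so sending a point to its part embeds every
chain into every partition into antichains; hence no chain is larger than any such partition
(`card_chain_le_card_antichains`).

For the reverse inequality, rank a point `x` by the largest size of a chain with greatest
element `x` (`chainRank`). The rank is strictly monotone, since a chain ending at `x < y` extends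
by `y` (`chainRank_strictMono`), so its fibres are antichains. If every chain has at most `K`
elements, the ranks lie in `{1, …, K}`, and the nonempty fibres form a partition into at most `K`
antichains (`exists_antichain_partition`).
-/

open Classical in
/-- The largest cardinality of a chain whose greatest element is `x`. -/
noncomputable def chainRank {P : Type*} [Fintype P] [PartialOrder P] (x : P) : ℕ :=
  (Finset.univ.filter fun C : Finset P =>
    IsChain (· ≤ ·) (C : Set P) ∧ x ∈ C ∧ ∀ y ∈ C, y ≤ x).sup Finset.card

section

variable {P : Type*} [Fintype P] [PartialOrder P]

lemma card_le_chainRank {x : P} {C : Finset P} (hC : IsChain (· ≤ ·) (C : Set P))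
    (hx : x ∈ C) (hle : ∀ y ∈ C, y ≤ x) : C.card ≤ chainRank x := by
  classical
  unfold chainRank
  exact Finset.le_sup (f := Finset.card) (by simp [hC, hx]; exact hle)

lemma exists_chain_card_eq_chainRank (x : P) :
    ∃ C : Finset P, IsChain (· ≤ ·) (C : Set P) ∧ x ∈ C ∧ (∀ y ∈ C, y ≤ x) ∧
      C.card = chainRank x := by
  classical
  obtain ⟨C, hC, h⟩ := Finset.exists_mem_eq_sup
    (Finset.univ.filter fun C : Finset P =>
      IsChain (· ≤ ·) (C : Set P) ∧ x ∈ C ∧ ∀ y ∈ C, y ≤ x)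
    ⟨{x}, by simp⟩ Finset.card
  simp only [Finset.mem_filter, Finset.mem_univ, true_and] at hC
  refine ⟨C, hC.1, hC.2.1, hC.2.2, ?_⟩
  unfold chainRank
  convert h.symm

lemma chainRank_strictMono : StrictMono (chainRank : P → ℕ) := by
  classical
  intro x y hxy
  obtain ⟨C, hC, -, hle, hcard⟩ := exists_chain_card_eq_chainRank x
  have hy : y ∉ C := fun h => (hle y h).not_gt hxy
  have hlt : ∀ z ∈ C, z ≤ y := fun z hz => (hle z hz).trans hxy.le
  have := card_le_chainRank (x := y) (C := insert y C)
    (by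
      rw [Finset.coe_insert]
      exact hC.insert fun z hz _ => Or.inr (hlt z hz))
    (Finset.mem_insert_self _ _)
    (by
      intro z hz
      rcases Finset.mem_insert.1 hz with rfl | hz
      · exact le_rfl
      · exact hlt z hz)
  rw [Finset.card_insert_of_notMem hy] at this
  omega

/-- The nonempty fibres of `chainRank` partition `P` into antichains, and their number is at most
any upper bound for the sizes of chains. -/
lemma exists_antichain_partition {K : ℕ}
    (hK : ∀ C : Finset P, IsChain (· ≤ ·) (C : Set P) → C.card ≤ K) :
    ∃ 𝒜 : Finset (Finset P), 𝒜.card ≤ K ∧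
      (∀ A ∈ 𝒜, IsAntichain (· ≤ ·) (A : Set P)) ∧
      (∀ p : P, ∃! A, A ∈ 𝒜 ∧ p ∈ A) := by
  classical
  let F : ℕ → Finset P := fun n => Finset.univ.filter fun y => chainRank y = n
  refine ⟨(Finset.univ.image (chainRank : P → ℕ)).image F, ?_, ?_, ?_⟩
  · have hsub : Finset.univ.image (chainRank : P → ℕ) ⊆ Finset.Icc 1 K := by
      intro n hn
      obtain ⟨x, -, rfl⟩ := Finset.mem_image.1 hn
      obtain ⟨C, hC, hx, -, hcard⟩ := exists_chain_card_eq_chainRank x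
      have hpos : 0 < C.card := Finset.card_pos.2 ⟨x, hx⟩
      have := hK C hC
      rw [Finset.mem_Icc]
      omega
    calc ((Finset.univ.image (chainRank : P → ℕ)).image F).card
        ≤ (Finset.univ.image (chainRank : P → ℕ)).card := Finset.card_image_le
      _ ≤ (Finset.Icc 1 K).card := Finset.card_le_card hsub
      _ = K := by simp
  · intro A hA
    obtain ⟨n, -, rfl⟩ := Finset.mem_image.1 hA
    intro x hx y hy hne hle
    have hlt := chainRank_strictMono (lt_of_le_of_ne hle hne)
    simp only [F, Finset.coe_filter, Finset.mem_univ, true_and, Set.mem_ofPred_eq] at hx hy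
    omega
  · intro p
    refine ⟨F (chainRank p), ⟨?_, by simp [F]⟩, ?_⟩
    · exact Finset.mem_image_of_mem _ (Finset.mem_image_of_mem _ (Finset.mem_univ p))
    · rintro A ⟨hA, hp⟩
      obtain ⟨n, -, rfl⟩ := Finset.mem_image.1 hA
      have hn : chainRank p = n := by simpa [F] using hp
      rw [hn]

omit [Fintype P] in
lemma card_chain_le_card_antichains {C : Finset P} (hC : IsChain (· ≤ ·) (C : Set P))
    {𝒜 : Finset (Finset P)} (hA : ∀ A ∈ 𝒜, IsAntichain (· ≤ ·) (A : Set P))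
    (hcover : ∀ p : P, ∃ A, A ∈ 𝒜 ∧ p ∈ A) : C.card ≤ 𝒜.card := by
  choose part hpart hmem using hcover
  refine Finset.card_le_card_of_injOn part (fun p _ => hpart p) ?_
  intro x hx y hy hxy
  have hy' : y ∈ part x := hxy ▸ hmem y
  rcases hC.total hx hy with h | h
  · exact (hA _ (hpart x)).eq (hmem x) hy' h
  · exact ((hA _ (hpart x)).eq hy' (hmem x) h).symm

end

/-- Mirsky's theorem: in a finite poset, the maximum cardinality of a chain equals the
minimum number of antichains into which the poset can be partitioned. -/
theorem stmt14 {P : Type*} [Fintype P] [PartialOrder P] :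
    sSup {n : ℕ | ∃ C : Finset P, IsChain (· ≤ ·) (C : Set P) ∧ C.card = n} =
    sInf {m : ℕ | ∃ 𝒜 : Finset (Finset P), 𝒜.card = m ∧
      (∀ A ∈ 𝒜, IsAntichain (· ≤ ·) (A : Set P)) ∧
      (∀ p : P, ∃! A, A ∈ 𝒜 ∧ p ∈ A)} := by
  -- `sSup` on `ℕ` is meaningful only for a set that is bounded above.
  have hbdd : BddAbove {n : ℕ | ∃ C : Finset P, IsChain (· ≤ ·) (C : Set P) ∧ C.card = n} := by
    refine ⟨Fintype.card P, ?_⟩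
    rintro n ⟨C, -, rfl⟩
    exact Finset.card_le_univ C
  obtain ⟨𝒜, hcard, hA, hpart⟩ := exists_antichain_partition (P := P)
    fun C hC => le_csSup hbdd ⟨C, hC, rfl⟩
  apply le_antisymm
  · refine csSup_le ⟨0, ∅, by simp, rfl⟩ ?_
    rintro n ⟨C, hC, rfl⟩
    refine le_csInf ⟨𝒜.card, 𝒜, rfl, hA, hpart⟩ ?_
    rintro m ⟨ℬ, rfl, hB, hB'⟩
    exact card_chain_le_card_antichains hC hB fun p => (hB' p).exists
  · refine le_trans (Nat.sInf_le ?_) hcard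
    exact ⟨𝒜, rfl, hA, hpart⟩
end

section
/- Let X be a finite topological space and let X₀ be its Kolmogorov quotient, the quotient of X by the equivalence relation x ~ y iff x and y are topologically indistinguishable (x ≤ y and y ≤ x in the specialization preorder), equipped with the quotient topology. Then X₀ is a T0 space and the quotient map q : X → X₀ is a homotopy equivalence. -/
/-! A map into a space `Y` is continuous as soon as its composite with `Y → SeparationQuotient Y` is,
because that quotient map induces the topology of `Y`. This makes any set-theoretic section `g` of
the quotient map `q` continuous, and likewise any jump between pointwise inseparable maps. So `q ∘ g`
is the identity, and `g ∘ q`, which is pointwise inseparable from the identity, is homotopic to it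
by `homotopic_of_inseparable`. -/

/-- Pointwise inseparable maps are homotopic: the homotopy equals `f` at time `0` and jumps to `g`
at once, which is invisible to the open sets of `Y`. -/
theorem homotopic_of_inseparable {X Y : Type*} [TopologicalSpace X] [TopologicalSpace Y]
    {f g : C(X, Y)} (h : ∀ x, Inseparable (f x) (g x)) : f.Homotopic g := by
  classical
  refine ⟨⟨⟨fun p => if p.1 = 0 then f p.2 else g p.2, ?_⟩, ?_, ?_⟩⟩
  · rw [SeparationQuotient.isInducing_mk.continuous_iff]
    have key : (SeparationQuotient.mk ∘ fun p : unitInterval × X =>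
        if p.1 = 0 then f p.2 else g p.2) = fun p => SeparationQuotient.mk (f p.2) := by
      funext p
      by_cases hp : p.1 = 0
      · simp [hp]
      · simpa [hp] using (h p.2).symm
    rw [key]
    exact SeparationQuotient.continuous_mk.comp (f.continuous.comp continuous_snd)
  · intro x
    simp
  · intro x
    simp


/-- The Kolmogorov quotient of a finite topological space is T0, and the quotient map
is a homotopy equivalence. -/
theorem stmt15 {X : Type*} [TopologicalSpace X] [Finite X] :
    T0Space (SeparationQuotient X) ∧
    ∃ g : C(SeparationQuotient X, X),
      ContinuousMap.Homotopic
        (g.comp ⟨SeparationQuotient.mk, SeparationQuotient.continuous_mk⟩)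
        (ContinuousMap.id X) ∧
      ContinuousMap.Homotopic
        ((⟨SeparationQuotient.mk, SeparationQuotient.continuous_mk⟩ :
            C(X, SeparationQuotient X)).comp g)
        (ContinuousMap.id (SeparationQuotient X)) := by
  have hs : ∀ y : SeparationQuotient X,
      SeparationQuotient.mk (Function.surjInv SeparationQuotient.surjective_mk y) = y :=
    Function.surjInv_eq SeparationQuotient.surjective_mk
  refine ⟨inferInstance, ⟨Function.surjInv SeparationQuotient.surjective_mk, ?_⟩, ?_, ?_⟩
  · rw [SeparationQuotient.isInducing_mk.continuous_iff]
    exact continuous_id.congr fun y => (hs y).symm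
  · exact homotopic_of_inseparable fun x => SeparationQuotient.mk_eq_mk.1 (hs _)
  · exact homotopic_of_inseparable fun y => Inseparable.of_eq (hs y)
end

section
/- Let X be a finite T0 topological space with specialization partial order ≤, and let x ∈ X be a beat point: either a down beat point, meaning that U_x \ {x} = {y : y ≤ x, y ≠ x} has a greatest element, or an up beat point, meaning that F_x \ {x} = {y : x ≤ y, y ≠ x} has a least element. Then the subspace X \ {x} is a deformation retract of X: there is a continuous retraction r : X → X \ {x} with r restricting to the identity on X \ {x}, such that the composite of r with the inclusion i : X \ {x} ↪ X is homotopic to the identity of X; in particular the inclusion i is a homotopy equivalence. -/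
/-- `x` is a down beat point: `U_x \ {x}` has a greatest element. -/
def IsDownBeatPoint {X : Type*} [TopologicalSpace X] (x : X) : Prop :=
  ∃ m, (m ∈ minNbhd x ∧ m ≠ x) ∧ ∀ y, (y ∈ minNbhd x ∧ y ≠ x) → y ∈ minNbhd m

/-- `x` is an up beat point: `F_x \ {x}` has a least element. -/
def IsUpBeatPoint {X : Type*} [TopologicalSpace X] (x : X) : Prop :=
  ∃ m, (x ∈ minNbhd m ∧ m ≠ x) ∧ ∀ y, (x ∈ minNbhd y ∧ y ≠ x) → m ∈ minNbhd y

lemma mem_minNbhd_iff {X : Type*} [TopologicalSpace X] {x y : X} : y ∈ minNbhd x ↔ y ⤳ x := by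
  simp [minNbhd, specializes_iff_forall_open]

/-- The up and down cases of a beat point, put in one self-dual form. -/
lemma exists_comparable_of_beat {X : Type*} [TopologicalSpace X] {x : X}
    (h : IsDownBeatPoint x ∨ IsUpBeatPoint x) :
    ∃ m, m ≠ x ∧ (m ⤳ x ∨ x ⤳ m) ∧
      ∀ y, y ≠ x → (y ⤳ x → y ⤳ m) ∧ (x ⤳ y → m ⤳ y) := by
  simp only [IsDownBeatPoint, IsUpBeatPoint, mem_minNbhd_iff] at h
  rcases h with ⟨m, ⟨hm, hne⟩, H⟩ | ⟨m, ⟨hm, hne⟩, H⟩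
  · exact ⟨m, hne, .inl hm, fun y hy => ⟨fun h => H y ⟨h, hy⟩, fun h => hm.trans h⟩⟩
  · exact ⟨m, hne, .inr hm, fun y hy => ⟨fun h => h.trans hm, fun h => H y ⟨h, hy⟩⟩⟩

lemma continuous_of_specializes {X Y : Type*} [TopologicalSpace X] [TopologicalSpace Y]
    [AlexandrovDiscrete X] {f : X → Y} (h : ∀ a b, a ⤳ b → f a ⤳ f b) : Continuous f :=
  continuous_def.2 fun _ hU =>
    isOpen_iff_forall_specializes.2 fun a b hab hb => (h a b hab).mem_open hU hb

lemma homotopic_of_specializes {X Y : Type*} [TopologicalSpace X] [TopologicalSpace Y]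
    {f g : C(X, Y)} (h : ∀ z, f z ⤳ g z) : f.Homotopic g := by
  classical
  have hs : IsOpen {p : unitInterval × X | p.1 < 1} := isOpen_lt continuous_fst continuous_const
  exact ⟨{
    toFun := Set.piecewise {p : unitInterval × X | p.1 < 1} (fun p => f p.2) (fun p => g p.2)
    continuous_toFun := hs.continuous_piecewise_of_specializes
      (f.continuous.comp continuous_snd) (g.continuous.comp continuous_snd) fun p => h p.2
    map_zero_left := fun z => by simp [Set.piecewise]
    map_one_left := fun z => by simp [Set.piecewise] }⟩

theorem stmt16 {X : Type*} [TopologicalSpace X] [Finite X] [T0Space X] (x : X)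
    (hbeat : IsDownBeatPoint x ∨ IsUpBeatPoint x) :
    ∃ r : C(X, {y : X // y ≠ x}),
      (∀ a : {y : X // y ≠ x}, r (a : X) = a) ∧
      ContinuousMap.Homotopic
        ((⟨Subtype.val, continuous_subtype_val⟩ : C({y : X // y ≠ x}, X)).comp r)
        (ContinuousMap.id X) ∧
      ∃ e : ContinuousMap.HomotopyEquiv {y : X // y ≠ x} X,
        e.toFun = (⟨Subtype.val, continuous_subtype_val⟩ : C({y : X // y ≠ x}, X)) := by
  classical
  obtain ⟨m, hne, hcomp, H⟩ := exists_comparable_of_beat hbeat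
  let ρ : X → {y : X // y ≠ x} := fun y => if h : y = x then ⟨m, hne⟩ else ⟨y, h⟩
  have hρx : (ρ x : X) = m := by simp [ρ]
  have hρ : ∀ y, y ≠ x → (ρ y : X) = y := fun y hy => by simp [ρ, hy]
  have hcont : Continuous ρ := by
    refine continuous_of_specializes fun a b hab => ?_
    rw [subtype_specializes_iff]
    by_cases ha : a = x <;> by_cases hb : b = x
    · rw [ha, hb]
    · subst ha
      rw [hρx, hρ b hb]
      exact (H b hb).2 hab
    · subst hb
      rw [hρx, hρ a ha]
      exact (H a ha).1 hab
    · rwa [hρ a ha, hρ b hb]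
  let r : C(X, {y : X // y ≠ x}) := ⟨ρ, hcont⟩
  have hr : ∀ a : {y : X // y ≠ x}, r (a : X) = a := fun a => Subtype.ext (hρ a a.2)
  have hhom : ContinuousMap.Homotopic
      ((⟨Subtype.val, continuous_subtype_val⟩ : C({y : X // y ≠ x}, X)).comp r)
      (ContinuousMap.id X) := by
    rcases hcomp with hm | hm
    · refine homotopic_of_specializes fun z => ?_
      change (ρ z : X) ⤳ z
      by_cases hz : z = x
      · rwa [hz, hρx]
      · rw [hρ z hz]
    · refine (homotopic_of_specializes fun z => ?_).symm
      change z ⤳ (ρ z : X)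
      by_cases hz : z = x
      · rwa [hz, hρx]
      · rw [hρ z hz]
  refine ⟨r, hr, hhom, ⟨⟨Subtype.val, continuous_subtype_val⟩, r, ?_, hhom⟩, rfl⟩
  have : r.comp ⟨Subtype.val, continuous_subtype_val⟩ = ContinuousMap.id {y : X // y ≠ x} :=
    ContinuousMap.ext hr
  rw [this]
end

section
/- (Stong's classification theorem) Let X and Y be minimal finite spaces, i.e., finite T0 topological spaces having no beat points (no point x such that {y : y ≤ x, y ≠ x} has a greatest element or {y : x ≤ y, y ≠ x} has a least element, where ≤ is the specialization order). Then every homotopy equivalence f : X → Y is a homeomorphism. -/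
/-- A beat point: either a down beat point (`U_x \ {x}` has a greatest element) or an
up beat point (`F_x \ {x}` has a least element), with respect to the specialization order. -/
def IsBeatPoint {X : Type*} [TopologicalSpace X] (x : X) : Prop :=
  (∃ m, (m ∈ minNbhd x ∧ m ≠ x) ∧ ∀ y, (y ∈ minNbhd x ∧ y ≠ x) → y ∈ minNbhd m) ∨
  (∃ m, (x ∈ minNbhd m ∧ m ≠ x) ∧ ∀ y, (x ∈ minNbhd y ∧ y ≠ x) → m ∈ minNbhd y)

/-- Rigidity for posets. The hypothesis `hmin` says that no `m < x` bounds everything strictly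
below `x`, i.e. that there are no down beat points; up beat points are handled by the order dual. -/
theorem eq_self_of_le {α : Type*} [PartialOrder α] [Finite α] {f : α → α} (hf : Monotone f)
    (hle : ∀ x, f x ≤ x) (hmin : ∀ x m : α, m < x → ∃ y, y < x ∧ ¬ y ≤ m) (x : α) : f x = x := by
  induction x using WellFoundedLT.induction with
  | _ x ih =>
    by_contra hx
    obtain ⟨y, hyx, hym⟩ := hmin x (f x) (lt_of_le_of_ne (hle x) hx)
    exact hym (ih y hyx ▸ hf hyx.le)

/-- Maps into a finite space move downwards locally: the minimal neighborhood of `f t` is open. -/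
theorem eventually_specializes {X T : Type*} [TopologicalSpace X] [Finite X]
    [TopologicalSpace T] {f : T → X} (hf : Continuous f)
    (t : T) : ∀ᶠ s in nhds t, f s ⤳ f t := by
  have hopen : IsOpen {y : X | y ⤳ f t} := by
    rw [isOpen_iff_forall_specializes]
    exact fun _ _ hxy hy => hxy.trans hy
  exact hf.continuousAt.eventually (hopen.mem_nhds (specializes_refl _))

section Rigidity

variable {X : Type*} [TopologicalSpace X] [Finite X] [T0Space X]

theorem eq_self_of_specializes (hX : ∀ x : X, ¬ IsBeatPoint x) {f : X → X} (hf : Continuous f)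
    (h : ∀ x, f x ⤳ x) (x : X) : f x = x := by
  -- Mathlib's order is opposite to that of `minNbhd`: there `x ≤ y` means `y ⤳ x`.
  let := specializationOrder X
  refine eq_self_of_le (α := Xᵒᵈ) (f := f) hf.specialization_monotone.dual h ?_ x
  intro x m hm
  by_contra! hc
  refine hX x (.inl ⟨m, ⟨mem_minNbhd_iff_specializes.2 hm.le, hm.ne⟩, fun y hy => ?_⟩)
  exact mem_minNbhd_iff_specializes.2
    (hc y (lt_of_le_of_ne (mem_minNbhd_iff_specializes.1 hy.1) hy.2))

theorem eq_self_of_specializes' (hX : ∀ x : X, ¬ IsBeatPoint x) {f : X → X} (hf : Continuous f)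
    (h : ∀ x, x ⤳ f x) (x : X) : f x = x := by
  let := specializationOrder X
  refine eq_self_of_le (α := X) (f := f) hf.specialization_monotone h ?_ x
  intro x m hm
  by_contra! hc
  refine hX x (.inr ⟨m, ⟨mem_minNbhd_iff_specializes.2 hm.le, hm.ne⟩, fun y hy => ?_⟩)
  exact mem_minNbhd_iff_specializes.2
    (hc y (lt_of_le_of_ne (mem_minNbhd_iff_specializes.1 hy.1) hy.2))

theorem eq_id_of_homotopic_id (hX : ∀ x : X, ¬ IsBeatPoint x) (k : C(X, X))
    (hk : k.Homotopic (ContinuousMap.id X)) (x : X) : k x = x := by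
  obtain ⟨H⟩ := hk
  have hev (t : unitInterval) : ∀ᶠ s in nhds t, ∀ x, H (s, x) ⤳ H (t, x) :=
    Filter.eventually_all.2 fun x =>
      eventually_specializes (f := fun s => H (s, x)) (by fun_prop) t
  let S : Set unitInterval := {t | ∀ x, H (t, x) = x}
  -- If `H_t = id`, then `H_s ≤ id` for `s` near `t`.
  have hSopen : IsOpen S := by
    rw [isOpen_iff_mem_nhds]
    intro t ht
    filter_upwards [hev t] with s hs
    exact eq_self_of_specializes hX (f := fun x => H (s, x)) (by fun_prop)
      fun x => (hs x).trans (specializes_of_eq (ht x))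
  -- If `t` is in the closure of `S`, then `id = H_s ≤ H_t` for some `s ∈ S` near `t`.
  have hSclosed : IsClosed S := by
    refine isClosed_of_closure_subset fun t ht => ?_
    obtain ⟨s, hs, hsS⟩ := mem_closure_iff_nhds.1 ht _ (hev t)
    exact eq_self_of_specializes' hX (f := fun x => H (t, x)) (by fun_prop)
      fun x => (specializes_of_eq (hsS x).symm).trans (hs x)
  have hS : S = Set.univ := IsClopen.eq_univ ⟨hSclosed, hSopen⟩ ⟨1, fun x => by simp⟩
  have h0 : (0 : unitInterval) ∈ S := hS ▸ Set.mem_univ _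
  simpa using h0 x

end Rigidity

/-- Stong's classification theorem: a homotopy equivalence between minimal finite
spaces (finite T0 spaces without beat points) is a homeomorphism. -/
theorem stmt17 {X Y : Type*} [TopologicalSpace X] [TopologicalSpace Y]
    [Finite X] [Finite Y] [T0Space X] [T0Space Y]
    (hX : ∀ x : X, ¬ IsBeatPoint x) (hY : ∀ y : Y, ¬ IsBeatPoint y)
    (f : C(X, Y)) (g : C(Y, X))
    (hgf : (g.comp f).Homotopic (ContinuousMap.id X))
    (hfg : (f.comp g).Homotopic (ContinuousMap.id Y)) :
    ∃ h : X ≃ₜ Y, ⇑h = ⇑f := by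
  exact ⟨{ toFun := f
           invFun := g
           left_inv := eq_id_of_homotopic_id hX (g.comp f) hgf
           right_inv := eq_id_of_homotopic_id hY (f.comp g) hfg
           continuous_toFun := f.continuous
           continuous_invFun := g.continuous }, rfl⟩
end
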